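/- arXiv:2512.16894 — 2 statements merged into one kernel-verified Lean document; each statement's English description precedes it below -/
import Mathlib

section
/- For every γ ∈ ℝ, every x > 0 and every measurable f : [0,1) → [0, ∞], one has the identity in [0, ∞]: ∫₀¹ f(m_x(y))·y^{γ−1}·(1 − y)^{−1−γ} dy = x^{−γ} · ∫₀¹ f(y)·y^{γ−1}·(1 − y)^{−1−γ} dy. Equivalently, the pushforward of ν_γ under m_x equals x^{−γ}·ν_γ. -/
open MeasureTheory Set
open scoped ENNReal

/-- The magic function `m_x(y) = x·y/(x·y + (1 − y))`. -/
noncomputable def magic (x y : ℝ) : ℝ := x * y / (x * y + (1 - y))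

/-- The measure `ν_γ` on `[0,1)` with density `y^{γ−1}·(1 − y)^{−1−γ}`. -/
noncomputable def nuGamma (γ : ℝ) : Measure ℝ :=
  (volume.restrict (Ico 0 1)).withDensity fun y =>
    ENNReal.ofReal (y ^ (γ - 1) * (1 - y) ^ (-1 - γ))

/-!
In the odds coordinate `t = y / (1 - y)`, which maps `(0, 1)` bijectively onto `(0, ∞)`, the magic
function `m_x` is multiplication by `x` and `ν_γ` is the measure `t ^ (γ - 1) dt`. Pushing that
measure forward under multiplication by `x` scales it by `x ^ (-γ)`.
-/

section ChangeOfVariables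

variable {s t : Set ℝ} {φ φ' : ℝ → ℝ} {v w : ℝ → ℝ≥0∞}

theorem map_restrict_withDensity_of_bijOn (hs : MeasurableSet s)
    (hφ' : ∀ y ∈ s, HasDerivWithinAt φ (φ' y) s y) (hφ : BijOn φ s t)
    (hvw : ∀ y ∈ s, v y = ENNReal.ofReal |φ' y| * w (φ y)) :
    Measure.map φ ((volume.restrict s).withDensity v) = (volume.restrict t).withDensity w := by
  have φ_aemeasurable : AEMeasurable φ (volume.restrict s) :=
    ContinuousOn.aemeasurable (fun y hy => (hφ' y hy).continuousWithinAt) hs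
  ext A hA
  calc Measure.map φ ((volume.restrict s).withDensity v) A
      = ∫⁻ y in φ ⁻¹' A, v y ∂volume.restrict s := by
        rw [Measure.map_apply_of_aemeasurable
          (φ_aemeasurable.mono_ac (withDensity_absolutelyContinuous _ _)) hA, withDensity_apply']
    _ = ∫⁻ y in s, (φ ⁻¹' A).indicator v y :=
        (lintegral_indicator₀ (φ_aemeasurable.nullMeasurableSet_preimage hA) v).symm
    _ = ∫⁻ y in s, ENNReal.ofReal |φ' y| * A.indicator w (φ y) := by
        refine setLIntegral_congr_fun hs fun y hy => ?_
        by_cases hyA : φ y ∈ A <;> simp [hyA, hvw y hy]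
    _ = ∫⁻ z in t, A.indicator w z := by
        rw [← hφ.image_eq, lintegral_image_eq_lintegral_abs_deriv_mul hs hφ' hφ.injOn]
    _ = (volume.restrict t).withDensity w A := by
        rw [lintegral_indicator hA, withDensity_apply']

end ChangeOfVariables

section Odds

/-- The odds `y / (1 - y)` of a probability `y`: the coordinate in which `magic x` is
multiplication by `x`. -/
noncomputable def odds (y : ℝ) : ℝ := y / (1 - y)

/-- The probability `t / (1 + t)` whose odds are `t`, the inverse of the coordinate `odds`. -/
noncomputable def probOfOdds (t : ℝ) : ℝ := t / (1 + t)

variable {x y t : ℝ}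

theorem measurable_odds : Measurable odds := by
  unfold odds
  fun_prop

theorem measurable_probOfOdds : Measurable probOfOdds := by
  unfold probOfOdds
  fun_prop

theorem probOfOdds_mul_odds (hy : y ≠ 1) : probOfOdds (x * odds y) = magic x y := by
  have one_sub_ne_zero : 1 - y ≠ 0 := sub_ne_zero.2 hy.symm
  unfold probOfOdds odds magic
  rw [← mul_div_assoc, one_add_div one_sub_ne_zero, div_div_div_cancel_right₀ one_sub_ne_zero,
    add_comm]

theorem magic_one (y : ℝ) : magic 1 y = y := by
  simp [magic]

theorem probOfOdds_odds (hy : y ≠ 1) : probOfOdds (odds y) = y := by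
  simpa only [one_mul, magic_one] using probOfOdds_mul_odds (x := 1) hy

theorem odds_probOfOdds (ht : t ≠ -1) : odds (probOfOdds t) = t := by
  have one_add_ne_zero : 1 + t ≠ 0 := by
    contrapose! ht
    linarith
  unfold odds probOfOdds
  rw [one_sub_div one_add_ne_zero, div_div_div_cancel_right₀ one_add_ne_zero, add_sub_cancel_right,
    div_one]

theorem bijOn_odds : BijOn odds (Ioo 0 1) (Ioi 0) := by
  have odds_pos : MapsTo odds (Ioo 0 1) (Ioi 0) := fun y hy =>
    div_pos hy.1 (sub_pos.2 hy.2)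
  have probOfOdds_mem : MapsTo probOfOdds (Ioi 0) (Ioo 0 1) := fun t (ht : 0 < t) =>
    ⟨by unfold probOfOdds; positivity, (div_lt_one (by positivity)).2 (by linarith)⟩
  have inverse : InvOn probOfOdds odds (Ioo 0 1) (Ioi 0) :=
    ⟨fun y hy => probOfOdds_odds hy.2.ne,
      fun t (ht : 0 < t) => odds_probOfOdds (by linarith)⟩
  exact inverse.bijOn odds_pos probOfOdds_mem

theorem hasDerivAt_odds (hy : y ≠ 1) : HasDerivAt odds (1 / (1 - y) ^ 2) y := by
  refine ((hasDerivAt_id' y).div ((hasDerivAt_id' y).const_sub 1)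
    (sub_ne_zero.2 hy.symm)).congr_deriv ?_
  ring

end Odds

section PowerMeasure

/-- The measure `t ^ (γ - 1) dt` on `(0, ∞)`, with the exponent normalised as in the Mellin
transform: it is the expression of `nuGamma γ` in the coordinate `odds`. -/
noncomputable def rpowMeasure (γ : ℝ) : Measure ℝ :=
  (volume.restrict (Ioi 0)).withDensity fun t => ENNReal.ofReal (t ^ (γ - 1))

theorem map_mul_left_rpowMeasure (γ : ℝ) {x : ℝ} (hx : 0 < x) :
    Measure.map (x * ·) (rpowMeasure γ) = ENNReal.ofReal (x ^ (-γ)) • rpowMeasure γ := by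
  have bijOn_mul : BijOn (x * ·) (Ioi 0) (Ioi 0) := by
    simpa only [image_const_mul_Ioi_zero hx] using
      (mul_right_injective₀ hx.ne').injOn.bijOn_image (s := Ioi 0)
  have density_eq (t : ℝ) (ht : 0 < t) :
      t ^ (γ - 1) = |x| * (x ^ (-γ) * (x * t) ^ (γ - 1)) := by
    have rpow_cancel : x * x ^ (-γ) * x ^ (γ - 1) = 1 := by
      rw [Real.rpow_neg hx.le, Real.rpow_sub_one hx.ne']
      field_simp
    rw [abs_of_pos hx, Real.mul_rpow hx.le ht.le, ← mul_assoc, ← mul_assoc, rpow_cancel, one_mul]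
  unfold rpowMeasure
  rw [← withDensity_smul' _ _ ENNReal.ofReal_ne_top]
  refine map_restrict_withDensity_of_bijOn measurableSet_Ioi
    (fun t _ => (hasDerivAt_const_mul x).hasDerivWithinAt) bijOn_mul fun t ht => ?_
  rw [density_eq t ht, ENNReal.ofReal_mul (abs_nonneg x), ENNReal.ofReal_mul (by positivity),
    Pi.smul_apply, smul_eq_mul]

end PowerMeasure

section NuGamma

theorem nuGamma_absolutelyContinuous_volume (γ : ℝ) : nuGamma γ ≪ volume :=
  (withDensity_absolutelyContinuous _ _).trans Measure.restrict_le_self.absolutelyContinuous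

theorem ae_nuGamma_ne_one (γ : ℝ) : ∀ᵐ y ∂nuGamma γ, y ≠ 1 :=
  (nuGamma_absolutelyContinuous_volume γ).ae_le (Measure.ae_ne volume 1)

theorem lintegral_nuGamma (γ : ℝ) (f : ℝ → ℝ≥0∞) :
    ∫⁻ y, f y ∂nuGamma γ =
      ∫⁻ y in Ico (0 : ℝ) 1, f y * ENNReal.ofReal (y ^ (γ - 1) * (1 - y) ^ (-1 - γ)) := by
  unfold nuGamma
  rw [lintegral_withDensity_eq_lintegral_mul_non_measurable _ (by fun_prop)
    (ae_of_all _ fun _ => ENNReal.ofReal_lt_top)]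
  simp only [Pi.mul_apply, mul_comm]

theorem map_odds_nuGamma (γ : ℝ) : Measure.map odds (nuGamma γ) = rpowMeasure γ := by
  have density_eq (y : ℝ) (hy : y ∈ Ioo (0 : ℝ) 1) :
      y ^ (γ - 1) * (1 - y) ^ (-1 - γ) = |1 / (1 - y) ^ 2| * odds y ^ (γ - 1) := by
    have one_sub_pos : 0 < 1 - y := sub_pos.2 hy.2
    have exponent_eq : -1 - γ = -(2 : ℕ) - (γ - 1) := by
      push_cast
      ring
    rw [exponent_eq, Real.rpow_sub one_sub_pos, Real.rpow_neg one_sub_pos.le, Real.rpow_natCast,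
      abs_of_pos (by positivity), odds, Real.div_rpow hy.1.le one_sub_pos.le]
    ring
  unfold nuGamma
  rw [Measure.restrict_congr_set Ioo_ae_eq_Ico.symm]
  refine map_restrict_withDensity_of_bijOn measurableSet_Ioo
    (fun y hy => (hasDerivAt_odds hy.2.ne).hasDerivWithinAt) bijOn_odds fun y hy => ?_
  rw [density_eq y hy, ENNReal.ofReal_mul (abs_nonneg _)]

theorem map_probOfOdds_rpowMeasure (γ : ℝ) :
    Measure.map probOfOdds (rpowMeasure γ) = nuGamma γ := by
  have comp_ae_eq_id : probOfOdds ∘ odds =ᵐ[nuGamma γ] id :=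
    (ae_nuGamma_ne_one γ).mono fun _ => probOfOdds_odds
  rw [← map_odds_nuGamma, Measure.map_map measurable_probOfOdds measurable_odds,
    Measure.map_congr comp_ae_eq_id, Measure.map_id]

theorem measurable_magic (x : ℝ) : Measurable (magic x) := by
  unfold magic
  fun_prop

theorem map_magic_nuGamma (γ : ℝ) {x : ℝ} (hx : 0 < x) :
    Measure.map (magic x) (nuGamma γ) = ENNReal.ofReal (x ^ (-γ)) • nuGamma γ := by
  have magic_ae_eq : magic x =ᵐ[nuGamma γ] probOfOdds ∘ (x * ·) ∘ odds :=
    (ae_nuGamma_ne_one γ).mono fun _ hy => (probOfOdds_mul_odds hy).symm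
  have measurable_mul : Measurable (x * ·) := measurable_const_mul x
  calc Measure.map (magic x) (nuGamma γ)
      = Measure.map probOfOdds (Measure.map (x * ·) (Measure.map odds (nuGamma γ))) := by
        rw [Measure.map_congr magic_ae_eq, Measure.map_map measurable_mul measurable_odds,
          Measure.map_map measurable_probOfOdds (measurable_mul.comp measurable_odds)]
    _ = ENNReal.ofReal (x ^ (-γ)) • nuGamma γ := by
        rw [map_odds_nuGamma, map_mul_left_rpowMeasure γ hx, Measure.map_smul,
          map_probOfOdds_rpowMeasure]

end NuGamma

/-- **Quasi-preservation of `ν_γ` by the magic family.**  For every `γ ∈ ℝ`, `x > 0` and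
measurable `f : [0,1) → [0,∞]`, `∫₀¹ f(m_x(y))·y^{γ−1}(1−y)^{−1−γ} dy
= x^{−γ}·∫₀¹ f(y)·y^{γ−1}(1−y)^{−1−γ} dy`; equivalently `(m_x)_♯ ν_γ = x^{−γ}·ν_γ`. -/
theorem magic_quasi_preserves_nuGamma (γ : ℝ) (x : ℝ) (hx : 0 < x) :
    (∀ f : ℝ → ℝ≥0∞, Measurable f →
      (∫⁻ y in Ico (0:ℝ) 1,
          f (magic x y) * ENNReal.ofReal (y ^ (γ - 1) * (1 - y) ^ (-1 - γ)))
        = ENNReal.ofReal (x ^ (-γ)) *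
          ∫⁻ y in Ico (0:ℝ) 1,
            f y * ENNReal.ofReal (y ^ (γ - 1) * (1 - y) ^ (-1 - γ))) ∧
    Measure.map (fun y => magic x y) (nuGamma γ) = ENNReal.ofReal (x ^ (-γ)) • nuGamma γ := by
  refine ⟨fun f hf => ?_, map_magic_nuGamma γ hx⟩
  rw [← lintegral_nuGamma γ fun y => f (magic x y), ← lintegral_nuGamma,
    ← lintegral_map hf (measurable_magic x), map_magic_nuGamma γ hx, lintegral_smul_measure,
    smul_eq_mul]
end

section
/- For all x, x' > 0 and all s ∈ [1/2, 1): 𝚏₁(s) = s and 𝚏_x(𝚏_{x'}(s)) = 𝚏_{x·x'}(s), i.e. the family (𝚏_x)_{x>0} is a multiplicative one-parameter semigroup of maps of [1/2, 1). -/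
open Set

/-- `h(s) = (1 − 2s)²/(s(1 − s))`. -/
noncomputable def hBro (s : ℝ) : ℝ := (1 - 2 * s) ^ 2 / (s * (1 - s))

/-- The locally largest growing family of the Brownian CRT (by mass):
`𝚏_x(s) = (1/2)(1 + √(h(s)/(4x⁻¹ + h(s))))`. -/
noncomputable def fBro (x s : ℝ) : ℝ :=
  (1 / 2) * (1 + Real.sqrt (hBro s / (4 * x⁻¹ + hBro s)))

/-!
The map `h` is an increasing bijection from `[1/2, 1)` onto `[0, ∞)`, and `𝚏_x = h⁻¹ ∘ (x · ) ∘ h`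
is multiplication by `x` read in the coordinate `h`. As `h(s) = h(1 - s)`, on all of `(0, 1)` the
map `𝚏₁` is the fold `s ↦ max s (1 - s)`, that is, the larger of the two fragments.
-/

lemma hBro_nonneg {s : ℝ} (hs : s ∈ Icc (0 : ℝ) 1) : 0 ≤ hBro s :=
  div_nonneg (sq_nonneg _) (mul_nonneg hs.1 (sub_nonneg.2 hs.2))

lemma hBro_half_mul_one_add (q : ℝ) : hBro (1 / 2 * (1 + q)) = 4 * q ^ 2 / (1 - q ^ 2) := by
  have numerator : (1 - 2 * (1 / 2 * (1 + q))) ^ 2 = q ^ 2 := by ring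
  have denominator : 1 / 2 * (1 + q) * (1 - 1 / 2 * (1 + q)) = (1 - q ^ 2) / 4 := by ring
  rw [hBro, numerator, denominator, div_div_eq_mul_div, mul_comm]

lemma hBro_div_four_add_hBro {s : ℝ} (hs₀ : s ≠ 0) (hs₁ : s ≠ 1) :
    hBro s / (4 + hBro s) = (1 - 2 * s) ^ 2 := by
  have hden : s * (1 - s) ≠ 0 := mul_ne_zero hs₀ (sub_ne_zero.2 hs₁.symm)
  have hadd : 4 + hBro s = 1 / (s * (1 - s)) := by
    rw [hBro, eq_div_iff hden, add_mul, div_mul_cancel₀ _ hden]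
    ring
  rw [hadd, hBro, div_div_div_cancel_right₀ hden, div_one]

/-- The inverse of the increasing bijection `hBro : [1/2, 1) → [0, ∞)`, given by the formula for
`𝚏₁` with `h(s)` replaced by a free variable. -/
noncomputable def hBroInv (y : ℝ) : ℝ :=
  1 / 2 * (1 + Real.sqrt (y / (4 + y)))

lemma hBro_hBroInv {y : ℝ} (hy : 0 ≤ y) : hBro (hBroInv y) = y := by
  have hcompl : 1 - y / (4 + y) = 4 / (4 + y) := by field_simp; ring
  rw [hBroInv, hBro_half_mul_one_add, Real.sq_sqrt (by positivity), hcompl]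
  field_simp

lemma hBroInv_hBro {s : ℝ} (hs₀ : s ≠ 0) (hs₁ : s ≠ 1) :
    hBroInv (hBro s) = max s (1 - s) := by
  calc hBroInv (hBro s)
      = 2⁻¹ * (1 + |1 - 2 * s|) := by
        rw [hBroInv, hBro_div_four_add_hBro hs₀ hs₁, Real.sqrt_sq_eq_abs, one_div]
    _ = max s (1 - s) := by
        rw [sup_eq_half_smul_add_add_abs_sub' ℝ s (1 - s), smul_eq_mul, add_sub_cancel, sub_sub,
          ← two_mul]

lemma fBro_eq_hBroInv_mul_hBro {x : ℝ} (hx : x ≠ 0) (s : ℝ) :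
    fBro x s = hBroInv (x * hBro s) := by
  have hden : 4 + x * hBro s = x * (4 * x⁻¹ + hBro s) := by field_simp
  rw [fBro, hBroInv, hden, mul_div_mul_left _ _ hx]

theorem fBro_semigroup_general {x x' s : ℝ} (hx : 0 < x) (hx' : 0 < x')
    (hs : s ∈ Ioo (0 : ℝ) 1) :
    fBro 1 s = max s (1 - s) ∧ fBro x (fBro x' s) = fBro (x * x') s := by
  constructor
  · rw [fBro_eq_hBroInv_mul_hBro one_ne_zero, one_mul, hBroInv_hBro hs.1.ne' hs.2.ne]
  · have hh : 0 ≤ x' * hBro s := mul_nonneg hx'.le (hBro_nonneg (Ioo_subset_Icc_self hs))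
    calc fBro x (fBro x' s)
        = hBroInv (x * hBro (hBroInv (x' * hBro s))) := by
          rw [fBro_eq_hBroInv_mul_hBro hx.ne', fBro_eq_hBroInv_mul_hBro hx'.ne']
      _ = hBroInv (x * x' * hBro s) := by rw [hBro_hBroInv hh, mul_assoc]
      _ = fBro (x * x') s := (fBro_eq_hBroInv_mul_hBro (mul_pos hx hx').ne' s).symm

/-- **The family `(𝚏_x)_{x>0}` is a multiplicative one-parameter semigroup of maps of
`[1/2, 1)`.**  For all `x, x' > 0` and `s ∈ [1/2, 1)`: `𝚏₁(s) = s` and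
`𝚏_x(𝚏_{x'}(s)) = 𝚏_{x·x'}(s)`. -/
theorem fBro_semigroup :
    ∀ x > (0:ℝ), ∀ x' > (0:ℝ), ∀ s ∈ Ico ((1:ℝ)/2) 1,
      fBro 1 s = s ∧ fBro x (fBro x' s) = fBro (x * x') s := by
  intro x hx x' hx' s hs
  have key := fBro_semigroup_general hx hx' ⟨one_half_pos.trans_le hs.1, hs.2⟩
  exact ⟨key.1.trans (max_eq_left (by linarith [hs.1])), key.2⟩
end
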